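/- arXiv:1207.4642 — 2 statements merged into one kernel-verified Lean document; each statement's English description precedes it below -/
import Mathlib

section
/- Let f ∈ L¹[0,1] and γ > 0. For every u ∈ L¹[0,1] and every sequence (u^k) in L¹[0,1] with ‖u^k − u‖_{L¹} → 0 as k → ∞, one has P_γ(u) ≤ liminf_{k→∞} Q_γ^k(u^k). -/
open MeasureTheory Filter Set
open scoped ENNReal Classical

noncomputable section

/-- The Lebesgue measure restricted to `[0,1]`. -/
def mu01 : Measure ℝ := volume.restrict (Set.Icc (0:ℝ) 1)

/-- The step function determined by partition points `x` and values `a`. -/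
def stepF {m : ℕ} (x : Fin (m + 1) → ℝ) (a : Fin m → ℝ) : ℝ → ℝ := fun t =>
  ∑ l : Fin m, Set.indicator (Set.Ioo (x l.castSucc) (x l.succ)) (fun _ => a l) t

/-- `u` is a.e. on `[0,1]` represented by the step function with partition `x` and values `a`. -/
def IsPCRep (u : ℝ → ℝ) {m : ℕ} (x : Fin (m + 1) → ℝ) (a : Fin m → ℝ) : Prop :=
  StrictMono x ∧ x 0 = 0 ∧ x (Fin.last m) = 1 ∧ ∀ᵐ t ∂mu01, u t = stepF x a t

/-- `u` is piecewise constant on `[0,1]` (up to a.e. equality). -/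
def IsPC (u : ℝ → ℝ) : Prop :=
  ∃ (m : ℕ) (x : Fin (m + 1) → ℝ) (a : Fin m → ℝ), IsPCRep u x a

/-- The number of jumps `J(u)`: the minimal number of interior partition points over all
piecewise constant representations of `u`. -/
def jumps (u : ℝ → ℝ) : ℕ :=
  sInf {jj : ℕ | ∃ (x : Fin (jj + 2) → ℝ) (a : Fin (jj + 1) → ℝ), IsPCRep u x a}

/-- `u` is piecewise constant with all jump locations inside `S`. -/
def IsPCIn (u : ℝ → ℝ) (S : Set ℝ) : Prop :=
  ∃ (m : ℕ) (x : Fin (m + 1) → ℝ) (a : Fin m → ℝ), IsPCRep u x a ∧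
    ∀ i : Fin (m + 1), i ≠ 0 → i ≠ Fin.last m → x i ∈ S

/-- The `L¹[0,1]` distance of two functions. -/
def L1dist (u v : ℝ → ℝ) : ℝ := ∫ t, |u t - v t| ∂mu01

/-- The continuous `L¹`-Potts functional `P_γ` with data `f`. -/
def Potts (γ : ℝ) (f u : ℝ → ℝ) : ℝ≥0∞ :=
  if IsPC u then ENNReal.ofReal (γ * (jumps u : ℝ) + L1dist u f) else ⊤

/-- The (semi-)discrete `L¹`-Potts functional with data `f`, restricted to piecewise
constant functions whose jumps lie in `S`. -/
def PottsIn (γ : ℝ) (f : ℝ → ℝ) (S : Set ℝ) (u : ℝ → ℝ) : ℝ≥0∞ :=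
  if IsPCIn u S then ENNReal.ofReal (γ * (jumps u : ℝ) + L1dist u f) else ⊤

/-!
Call `x` a jump point of `u` when `u` is not a.e. constant on any neighbourhood of `x`. Then `u` is
piecewise constant on `[0, 1]` exactly when it has finitely many jump points in `(0, 1)`, and their
number is `J(u)`; so `P_γ(u)` is `γ` times the number of jump points (possibly `∞`) plus the
distance to the data. If `x` is a jump point of `u` and `V` a connected neighbourhood of `x`, then
`u` has positive `L¹(V)`-distance from the (closed, finite-dimensional) space of constants, so every
function close to `u` in `L¹(V)` is non-constant on `V` and has a jump point there. Disjoint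
neighbourhoods of distinct jump points make the number of jump points lower semicontinuous in `L¹`.
-/

open scoped Topology

section Preliminaries

variable {α ι : Type*}

lemma eventually_eventually_nhds_inf [TopologicalSpace α] {l : Filter α} {p : α → Prop} {x : α}
    (h : ∀ᶠ t in 𝓝 x ⊓ l, p t) : ∀ᶠ y in 𝓝 x, ∀ᶠ t in 𝓝 y ⊓ l, p t := by
  obtain ⟨U, hU, T, hT, hUT⟩ := eventually_inf.1 h
  filter_upwards [eventually_mem_nhds_iff.2 hU] with y hy
  exact eventually_inf.2 ⟨U, hy, T, hT, hUT⟩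

lemma encard_le_encard_of_pairwiseDisjoint {s T W : Set α} {V : α → Set α}
    (hdisj : s.PairwiseDisjoint V) (hV : ∀ x ∈ s, (T ∩ V x).Nonempty) (hVW : ∀ x ∈ s, V x ⊆ W) :
    s.encard ≤ (T ∩ W).encard := by
  choose! y hy using hV
  refine encard_le_encard_of_injOn (f := y) (fun x hx => ⟨(hy x hx).1, hVW x hx (hy x hx).2⟩) ?_
  exact fun x hx z hz hxz =>
    hdisj.elim_set hx hz (y x) (hy x hx).2 (hxz ▸ (hy z hz).2)

lemma liminf_add_liminf_le_liminf_add (u v : ι → ℝ≥0∞) (l : Filter ι) :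
    liminf u l + liminf v l ≤ liminf (fun i => u i + v i) l := by
  rw [liminf_eq_iSup_iInf, liminf_eq_iSup_iInf]
  refine ENNReal.biSup_add_biSup_le' ⟨univ, univ_mem⟩ ⟨univ, univ_mem⟩ fun s hs t ht =>
    le_liminf_of_le (h := ?_)
  filter_upwards [hs, ht] with i his hit
  exact add_le_add (iInf₂_le i his) (iInf₂_le i hit)

variable [MeasurableSpace α]

lemma exists_pos_forall_le_integral_norm_sub_const {E : Type*} [NormedAddCommGroup E]
    [NormedSpace ℝ E] [FiniteDimensional ℝ E] {μ : Measure α} [IsFiniteMeasure μ] {u : α → E}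
    (hu : Integrable u μ) (hconst : ¬ EventuallyConst u (ae μ)) :
    ∃ ε > 0, ∀ c, ε ≤ ∫ x, ‖u x - c‖ ∂μ := by
  let K := LinearMap.range (Lp.constₗ 1 μ ℝ : E →ₗ[ℝ] Lp E 1 μ)
  have huK : hu.toL1 u ∉ K := by
    rintro ⟨c, hc⟩
    refine hconst (eventuallyConst_iff_exists_eventuallyEq.2 ⟨c, ?_⟩)
    exact (Integrable.toL1_eq_toL1_iff u (fun _ => c) hu (integrable_const c)).1 hc.symm
  refine ⟨_, (K.closed_of_finiteDimensional.notMem_iff_infDist_pos ⟨0, K.zero_mem⟩).1 huK,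
    fun c => ?_⟩
  calc Metric.infDist (hu.toL1 u) K
      ≤ dist (hu.toL1 u) ((integrable_const c).toL1 _) := Metric.infDist_le_dist_of_mem ⟨c, rfl⟩
    _ = ∫ x, ‖u x - c‖ ∂μ := by
      rw [dist_eq_norm, ← Integrable.toL1_sub, L1.norm_of_fun_eq_integral_norm]
      rfl

variable [TopologicalSpace α] {μ : Measure α} {s : Set α}

lemma neBot_nhds_inf_ae [μ.IsOpenPosMeasure] (x : α) : (𝓝 x ⊓ ae μ).NeBot := by
  refine inf_neBot_iff.2 fun {s} hs {t} ht => ?_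
  have hst : μ (s ∩ t) ≠ 0 := by
    rw [measure_inter_conull' (measure_mono_null (sdiff_subset_compl s t) ht)]
    exact (Measure.measure_pos_of_mem_nhds μ hs).ne'
  exact nonempty_of_measure_ne_zero hst

lemma ae_restrict_of_forall_eventually_nhds_inf_ae [SecondCountableTopology α]
    (hs : MeasurableSet s) {p : α → Prop} (h : ∀ x ∈ s, ∀ᶠ t in 𝓝 x ⊓ ae μ, p t) :
    ∀ᵐ t ∂μ.restrict s, p t := by
  refine (ae_restrict_iff' hs).2 (measure_null_of_locally_null _ fun x hx => ?_)
  obtain ⟨U, hU, T, hT, hUT⟩ := eventually_inf.1 (h x (Classical.not_imp.1 hx).1)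
  refine ⟨U ∩ {t | t ∈ s → p t}ᶜ, inter_mem (mem_nhdsWithin_of_mem_nhds hU) self_mem_nhdsWithin,
    measure_mono_null ?_ hT⟩
  rintro t ⟨htU, htp⟩ htT
  exact htp fun _ => hUT t ⟨htU, htT⟩

lemma exists_isOpen_isPreconnected_measure_ne_top [LocallyConnectedSpace α]
    [IsLocallyFiniteMeasure μ] {x : α} {U : Set α} (hU : U ∈ 𝓝 x) :
    ∃ V ⊆ U, x ∈ V ∧ IsOpen V ∧ IsPreconnected V ∧ μ V ≠ ∞ := by
  obtain ⟨O, hxO, hO, hμO⟩ := μ.exists_isOpen_measure_lt_top x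
  obtain ⟨V, hVUO, hV, hxV, hVconn⟩ := locallyConnectedSpace_iff_subsets_isOpen_isConnected.1 ‹_› x
    (U ∩ O) (inter_mem hU (hO.mem_nhds hxO))
  exact ⟨V, hVUO.trans inter_subset_left, hxV, hV, hVconn.isPreconnected,
    ((measure_mono (hVUO.trans inter_subset_right)).trans_lt hμO).ne⟩

lemma exists_pairwiseDisjoint_isOpen_isPreconnected [T2Space α] [LocallyConnectedSpace α]
    [IsLocallyFiniteMeasure μ] {W : Set α} (hs : s.Finite) (hW : IsOpen W) (hsW : s ⊆ W) :
    ∃ V : α → Set α, s.PairwiseDisjoint V ∧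
      ∀ x ∈ s, V x ⊆ W ∧ x ∈ V x ∧ IsOpen (V x) ∧ IsPreconnected (V x) ∧ μ (V x) ≠ ∞ := by
  obtain ⟨U, hU, hUdisj⟩ := hs.t2_separation
  have hV : ∀ x ∈ s, ∃ V ⊆ U x ∩ W,
      x ∈ V ∧ IsOpen V ∧ IsPreconnected V ∧ μ V ≠ ∞ := fun x hx =>
    exists_isOpen_isPreconnected_measure_ne_top
      (inter_mem ((hU x).2.mem_nhds (hU x).1) (hW.mem_nhds (hsW hx)))
  choose! V hVsub hV using hV
  exact ⟨V, fun x hx y hy hxy => (hUdisj hx hy hxy).mono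
      ((hVsub x hx).trans inter_subset_left) ((hVsub y hy).trans inter_subset_left),
    fun x hx => ⟨(hVsub x hx).trans inter_subset_right, hV x hx⟩⟩

end Preliminaries

section JumpSet

variable {α β ι : Type*} [TopologicalSpace α] [MeasurableSpace α] {μ : Measure α}

/-- The jump set of `u`: the points with no neighbourhood on which `u` is `μ`-a.e. constant. It
depends only on the a.e.-equivalence class of `u`. -/
def jumpSet (μ : Measure α) (u : α → β) : Set α :=
  {x | ¬ EventuallyConst u (𝓝 x ⊓ ae μ)}

lemma not_eventuallyConst_ae_restrict {u : α → β} {x : α} {U : Set α} (hU : U ∈ 𝓝 x)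
    (hUm : MeasurableSet U) (hx : x ∈ jumpSet μ u) : ¬ EventuallyConst u (ae (μ.restrict U)) := by
  refine fun h => hx (h.anti ?_)
  rw [ae_restrict_eq hUm, inf_comm]
  exact inf_le_inf_left _ (le_principal_iff.2 hU)

lemma eventuallyConst_ae_restrict_of_disjoint_jumpSet [SecondCountableTopology α]
    [μ.IsOpenPosMeasure] {s : Set α} {u : α → β} (hs : IsPreconnected s) (hsm : MeasurableSet s)
    (hu : Disjoint s (jumpSet μ u)) : EventuallyConst u (ae (μ.restrict s)) := by
  rcases s.eq_empty_or_nonempty with rfl | ⟨x₀, hx₀⟩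
  · simp
  have : Nonempty β := ⟨u x₀⟩
  have hloc : ∀ x ∈ s, ∃ c, u =ᶠ[𝓝 x ⊓ ae μ] fun _ => c := fun x hx =>
    (not_not.1 (disjoint_left.1 hu hx)).eventuallyEq_const
  choose! c hc using hloc
  have hc_locally : ∀ x ∈ s, ∀ᶠ y in 𝓝[s] x, c x = c y := fun x hx => by
    filter_upwards [nhdsWithin_le_nhds (eventually_eventually_nhds_inf (hc x hx)),
      self_mem_nhdsWithin] with y hxy hy
    have := neBot_nhds_inf_ae (μ := μ) y
    obtain ⟨t, hxt, hyt⟩ := (hxy.and (hc y hy)).exists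
    exact hxt.symm.trans hyt
  have hc_const : ∀ x ∈ s, c x = c x₀ := fun x hx =>
    hs.induction₂ (fun x y => c x = c y) hc_locally (fun _ _ _ _ _ _ => Eq.trans)
      (fun _ _ _ _ => Eq.symm) hx hx₀
  refine eventuallyConst_iff_exists_eventuallyEq.2 ⟨c x₀,
    ae_restrict_of_forall_eventually_nhds_inf_ae hsm fun x hx => ?_⟩
  simpa only [EventuallyEq, hc_const x hx] using hc x hx

variable [OpensMeasurableSpace α] [SecondCountableTopology α] [μ.IsOpenPosMeasure]
  {E : Type*} [NormedAddCommGroup E] [NormedSpace ℝ E] [FiniteDimensional ℝ E]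
  {u : α → E} {v : ι → α → E} {l : Filter ι} {W : Set α}

lemma eventually_jumpSet_inter_nonempty (hW : IsOpen W) (hWc : IsPreconnected W) (hWμ : μ W ≠ ∞)
    (hu : IntegrableOn u W μ)
    (hlim : Tendsto (fun i => ∫ x in W, ‖v i x - u x‖ ∂μ) l (𝓝 0))
    (hjump : (jumpSet μ u ∩ W).Nonempty) : ∀ᶠ i in l, (jumpSet μ (v i) ∩ W).Nonempty := by
  obtain ⟨x, hx, hxW⟩ := hjump
  have : IsFiniteMeasure (μ.restrict W) := isFiniteMeasure_restrict.2 hWμ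
  obtain ⟨ε, hε, hεu⟩ := exists_pos_forall_le_integral_norm_sub_const hu
    (not_eventuallyConst_ae_restrict (hW.mem_nhds hxW) hW.measurableSet hx)
  filter_upwards [hlim.eventually_lt_const hε] with i hi
  by_contra hempty
  have hvconst := eventuallyConst_ae_restrict_of_disjoint_jumpSet (u := v i) hWc hW.measurableSet
    (disjoint_iff_inter_eq_empty.2 (inter_comm _ _ ▸ not_nonempty_iff_eq_empty.1 hempty))
  obtain ⟨c, hc⟩ := hvconst.eventuallyEq_const
  refine (hεu c).not_gt (lt_of_eq_of_lt (integral_congr_ae ?_) hi)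
  filter_upwards [hc] with t ht
  rw [ht, norm_sub_rev]

theorem encard_jumpSet_inter_le_liminf [T2Space α] [LocallyConnectedSpace α]
    [IsLocallyFiniteMeasure μ] (hW : IsOpen W) (hu : IntegrableOn u W μ)
    (hv : ∀ i, IntegrableOn (v i) W μ)
    (hlim : Tendsto (fun i => ∫ x in W, ‖v i x - u x‖ ∂μ) l (𝓝 0)) :
    (jumpSet μ u ∩ W).encard ≤ liminf (fun i => (jumpSet μ (v i) ∩ W).encard) l := by
  refine ENat.forall_natCast_le_iff_le.1 fun n hn => ?_
  obtain ⟨s, hsub, hsn⟩ := exists_subset_encard_eq hn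
  have hsfin : s.Finite := finite_of_encard_eq_coe hsn
  obtain ⟨V, hdisj, hV⟩ := exists_pairwiseDisjoint_isOpen_isPreconnected (μ := μ) hsfin hW
    (hsub.trans inter_subset_right)
  have hVW : ∀ x ∈ s, V x ⊆ W := fun x hx => (hV x hx).1
  have hlimV : ∀ x ∈ s, Tendsto (fun i => ∫ t in V x, ‖v i t - u t‖ ∂μ) l (𝓝 0) := fun x hx =>
    squeeze_zero (fun i => integral_nonneg fun t => norm_nonneg _)
      (fun i => setIntegral_mono_set ((hv i).sub hu).norm
        (Eventually.of_forall fun t => norm_nonneg _) (hVW x hx).eventuallyLE) hlim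
  have hmeet : ∀ᶠ i in l, ∀ x ∈ s, (jumpSet μ (v i) ∩ V x).Nonempty := by
    refine (eventually_all_finite hsfin).2 fun x hx => ?_
    obtain ⟨-, hxV, hVo, hVc, hVμ⟩ := hV x hx
    exact eventually_jumpSet_inter_nonempty hVo hVc hVμ (hu.mono_set (hVW x hx))
      (hlimV x hx) ⟨x, (hsub hx).1, hxV⟩
  refine le_liminf_of_le (h := hmeet.mono fun i hi => ?_)
  exact hsn ▸ encard_le_encard_of_pairwiseDisjoint hdisj hi hVW

end JumpSet

section StepFunctions

variable {α : Type*}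

lemma exists_mem_Ioo_castSucc_succ [LinearOrder α] {m : ℕ} {x : Fin (m + 1) → α}
    {t : α} (h₀ : x 0 < t) (h₁ : t < x (Fin.last m)) (ht : t ∉ range x) :
    ∃ l : Fin m, t ∈ Ioo (x l.castSucc) (x l.succ) := by
  by_contra! h
  have hlt : ∀ i, x i < t := by
    intro i
    induction i using Fin.induction with
    | zero => exact h₀
    | succ l ih =>
      exact (not_lt.1 fun hl => h l ⟨ih, hl⟩).lt_of_ne fun he => ht ⟨_, he⟩
  exact (hlt _).not_gt h₁

lemma notMem_Ioo_castSucc_succ [LinearOrder α] {m : ℕ} {x : Fin (m + 1) → α}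
    (hx : StrictMono x) (i : Fin (m + 1)) (l : Fin m) : x i ∉ Ioo (x l.castSucc) (x l.succ) :=
  fun h => (Fin.castSucc_lt_iff_succ_le.1 (hx.lt_iff_lt.1 h.1)).not_gt (hx.lt_iff_lt.1 h.2)

lemma exists_strictMono_subset_range [LinearOrder α] {a b : α} (hab : a < b)
    (F : Finset α) (hF : ↑F ⊆ Ioo a b) : ∃ x : Fin (F.card + 2) → α,
      StrictMono x ∧ x 0 = a ∧ x (Fin.last _) = b ∧ ↑F ⊆ range x := by
  have hb : b ∉ F := fun h => (hF h).2.false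
  have ha : a ∉ insert b F := by simpa [hab.ne] using fun h => (hF h).1.false
  set G : Finset α := insert a (insert b F) with hG
  have hcard : G.card = F.card + 2 := by
    rw [hG, Finset.card_insert_of_notMem ha, Finset.card_insert_of_notMem hb]
  have hmono := (G.orderEmbOfFin hcard).strictMono
  have hrange : range (G.orderEmbOfFin hcard) = insert a (insert b ↑F) := by
    simp [hG]
  have hGsub : ∀ i, G.orderEmbOfFin hcard i ∈ Icc a b := fun i =>
    (insert_subset (left_mem_Icc.2 hab.le) <| insert_subset (right_mem_Icc.2 hab.le) <|
      hF.trans Ioo_subset_Icc_self) (hrange ▸ mem_range_self i)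
  obtain ⟨i, hi⟩ : a ∈ range (G.orderEmbOfFin hcard) := by simp [hrange]
  obtain ⟨j, hj⟩ : b ∈ range (G.orderEmbOfFin hcard) := by simp [hrange]
  refine ⟨_, hmono, le_antisymm (hi ▸ hmono.monotone (Fin.zero_le i)) (hGsub _).1,
    le_antisymm (hGsub _).2 (hj ▸ hmono.monotone (Fin.le_last j)), ?_⟩
  rw [hrange]
  exact (subset_insert _ _).trans (subset_insert _ _)

lemma stepF_eq_of_mem_Ioo {m : ℕ} {x : Fin (m + 1) → ℝ} (hx : StrictMono x) (a : Fin m → ℝ)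
    {l : Fin m} {t : ℝ} (ht : t ∈ Ioo (x l.castSucc) (x l.succ)) : stepF x a t = a l := by
  rw [stepF, Finset.sum_eq_single l _ (by simp), indicator_of_mem ht]
  intro j _ hj
  refine indicator_of_notMem (fun htj => hj ?_) _
  rcases lt_trichotomy j l with hlt | rfl | hlt
  · exact absurd (htj.2.trans_le (hx.monotone (Fin.succ_le_castSucc_iff.2 hlt))) ht.1.not_gt
  · rfl
  · exact absurd (ht.2.trans_le (hx.monotone (Fin.succ_le_castSucc_iff.2 hlt))) htj.1.not_gt

variable {u : ℝ → ℝ}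

lemma IsPCRep.jumpSet_inter_subset {m : ℕ} {x : Fin (m + 1) → ℝ} {a : Fin m → ℝ}
    (h : IsPCRep u x a) :
    jumpSet volume u ∩ Ioo 0 1 ⊆ x '' {i | i ≠ 0 ∧ i ≠ Fin.last m} := by
  obtain ⟨hx, hx0, hx1, hu⟩ := h
  rintro t ⟨htu, ht⟩
  have htx : t ∈ range x := by
    by_contra htx
    obtain ⟨l, hl⟩ := exists_mem_Ioo_castSucc_succ (hx0 ▸ ht.1) (hx1 ▸ ht.2) htx
    refine htu (eventuallyConst_iff_exists_eventuallyEq.2 ⟨a l, ?_⟩)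
    have hnear : Ioo (x l.castSucc) (x l.succ) ∩ Ioo 0 1 ∈ 𝓝 t :=
      inter_mem (isOpen_Ioo.mem_nhds hl) (isOpen_Ioo.mem_nhds ht)
    filter_upwards [mem_inf_of_left hnear,
      mem_inf_of_right ((ae_restrict_iff' measurableSet_Icc).1 hu)] with r hr hur
    rw [hur (Ioo_subset_Icc_self hr.2), stepF_eq_of_mem_Ioo hx a hr.1]
  obtain ⟨i, rfl⟩ := htx
  exact ⟨i, ⟨fun hi => ht.1.ne' (hi ▸ hx0), fun hi => ht.2.ne (hi ▸ hx1)⟩, rfl⟩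

lemma IsPCRep.encard_jumpSet_inter_le {j : ℕ} {x : Fin (j + 2) → ℝ} {a : Fin (j + 1) → ℝ}
    (h : IsPCRep u x a) : (jumpSet volume u ∩ Ioo 0 1).encard ≤ j := by
  have hcard : {i : Fin (j + 2) | i ≠ 0 ∧ i ≠ Fin.last (j + 1)}.encard = j := by
    have hcompl : {i : Fin (j + 2) | i ≠ 0 ∧ i ≠ Fin.last (j + 1)} =
        (({0, Fin.last (j + 1)}ᶜ : Finset (Fin (j + 2))) : Set (Fin (j + 2))) := by
      ext; simp [and_comm]
    rw [hcompl, encard_coe_eq_coe_finsetCard, Finset.card_compl, Finset.card_pair Fin.last_pos.ne,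
      Fintype.card_fin, Nat.add_sub_cancel]
  exact hcard ▸ (encard_le_encard h.jumpSet_inter_subset).trans (encard_image_le _ _)

lemma exists_isPCRep_of_jumpSet_inter_subset (F : Finset ℝ) (hF : ↑F ⊆ Ioo (0 : ℝ) 1)
    (hu : jumpSet volume u ∩ Ioo 0 1 ⊆ F) :
    ∃ (x : Fin (F.card + 2) → ℝ) (a : Fin (F.card + 1) → ℝ), IsPCRep u x a := by
  obtain ⟨x, hx, hx0, hx1, hFx⟩ := exists_strictMono_subset_range one_pos F hF
  have hx_mem : ∀ i, x i ∈ Icc (0 : ℝ) 1 := fun i =>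
    ⟨hx0 ▸ hx.monotone (Fin.zero_le i), hx1 ▸ hx.monotone (Fin.le_last i)⟩
  have hconst : ∀ l : Fin (F.card + 1),
      ∃ c, ∀ᵐ t, t ∈ Ioo (x l.castSucc) (x l.succ) → u t = c := by
    intro l
    have hdisj : Disjoint (Ioo (x l.castSucc) (x l.succ)) (jumpSet volume u) := by
      refine disjoint_left.2 fun t ht htu => ?_
      obtain ⟨i, rfl⟩ := hFx (hu ⟨htu, Ioo_subset_Ioo (hx_mem _).1 (hx_mem _).2 ht⟩)
      exact notMem_Ioo_castSucc_succ hx i l ht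
    obtain ⟨c, hc⟩ := (eventuallyConst_ae_restrict_of_disjoint_jumpSet isPreconnected_Ioo
      measurableSet_Ioo hdisj).eventuallyEq_const
    exact ⟨c, (ae_restrict_iff' measurableSet_Ioo).1 hc⟩
  choose a ha using hconst
  refine ⟨x, a, hx, hx0, hx1, (ae_restrict_iff' measurableSet_Icc).2 ?_⟩
  filter_upwards [(finite_range x).countable.ae_notMem volume, ae_all_iff.2 ha] with t htx hut ht
  obtain ⟨l, hl⟩ := exists_mem_Ioo_castSucc_succ
    ((hx0.trans_le ht.1).lt_of_ne fun h => htx ⟨_, h⟩)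
    ((ht.2.trans_eq hx1.symm).lt_of_ne fun h => htx ⟨_, h.symm⟩) htx
  rw [hut l hl, stepF_eq_of_mem_Ioo hx a hl]

lemma IsPC.exists_isPCRep_jumps (hu : IsPC u) :
    ∃ (x : Fin (jumps u + 2) → ℝ) (a : Fin (jumps u + 1) → ℝ), IsPCRep u x a := by
  refine Nat.sInf_mem (s := {j | ∃ (x : Fin (j + 2) → ℝ) (a : Fin (j + 1) → ℝ), IsPCRep u x a}) ?_
  obtain ⟨_ | j, x, a, h⟩ := hu
  · exact absurd (h.2.1.symm.trans h.2.2.1) zero_ne_one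
  · exact ⟨j, x, a, h⟩

theorem isPC_iff_finite_jumpSet_inter : IsPC u ↔ (jumpSet volume u ∩ Ioo 0 1).Finite := by
  constructor
  · rintro ⟨m, x, a, h⟩
    exact (toFinite _).subset h.jumpSet_inter_subset
  · intro hfin
    obtain ⟨x, a, h⟩ := exists_isPCRep_of_jumpSet_inter_subset (u := u) hfin.toFinset (by simp)
      (by simp)
    exact ⟨_, x, a, h⟩

theorem IsPC.encard_jumpSet_inter (hu : IsPC u) :
    (jumpSet volume u ∩ Ioo 0 1).encard = jumps u := by
  apply le_antisymm
  · obtain ⟨x, a, h⟩ := hu.exists_isPCRep_jumps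
    exact h.encard_jumpSet_inter_le
  · have hfin := isPC_iff_finite_jumpSet_inter.1 hu
    rw [hfin.encard_eq_coe_toFinset_card, Nat.cast_le]
    exact Nat.sInf_le <|
      exists_isPCRep_of_jumpSet_inter_subset hfin.toFinset (by simp) (by simp)

end StepFunctions

section Potts

variable {ι : Type*} {γ : ℝ} {f u : ℝ → ℝ}

lemma L1dist_nonneg (u v : ℝ → ℝ) : 0 ≤ L1dist u v := integral_nonneg fun _ => abs_nonneg _

lemma Potts_eq_encard_jumpSet_add (hγ : 0 < γ) : Potts γ f u =
    ENNReal.ofReal γ * ((jumpSet volume u ∩ Ioo 0 1).encard : ℝ≥0∞) +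
      ENNReal.ofReal (L1dist u f) := by
  rw [Potts]
  split_ifs with hu
  · rw [hu.encard_jumpSet_inter, ENNReal.ofReal_add (by positivity) (L1dist_nonneg u f),
      ENNReal.ofReal_mul hγ.le]
    simp
  · rw [isPC_iff_finite_jumpSet_inter, ← Set.Infinite, ← encard_eq_top_iff] at hu
    simp [hu, hγ]

lemma Potts_le_PottsIn (γ : ℝ) (f : ℝ → ℝ) (S : Set ℝ) (u : ℝ → ℝ) :
    Potts γ f u ≤ PottsIn γ f S u := by
  rw [PottsIn]
  split_ifs with hu
  · obtain ⟨m, x, a, h, -⟩ := hu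
    rw [Potts, if_pos ⟨m, x, a, h⟩]
  · exact le_top

variable {l : Filter ι} {v : ι → ℝ → ℝ}

lemma tendsto_L1dist (hf : IntegrableOn f (Icc 0 1)) (hu : IntegrableOn u (Icc 0 1))
    (hv : ∀ i, IntegrableOn (v i) (Icc 0 1)) (hlim : Tendsto (fun i => L1dist (v i) u) l (𝓝 0)) :
    Tendsto (fun i => L1dist (v i) f) l (𝓝 (L1dist u f)) := by
  refine tendsto_iff_norm_sub_tendsto_zero.2
    (squeeze_zero (fun i => norm_nonneg _) (fun i => ?_) hlim)
  have hsub : L1dist (v i) f - L1dist u f = ∫ t in Icc 0 1, (|v i t - f t| - |u t - f t|) :=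
    (integral_sub ((hv i).sub hf).abs (hu.sub hf).abs).symm
  rw [hsub]
  refine norm_integral_le_of_norm_le ((hv i).sub hu).abs (Eventually.of_forall fun t => ?_)
  simpa using abs_abs_sub_abs_le (v i t - f t) (u t - f t)

lemma encard_jumpSet_inter_Ioo_le_liminf [l.NeBot] (hu : IntegrableOn u (Icc 0 1))
    (hv : ∀ i, IntegrableOn (v i) (Icc 0 1)) (hlim : Tendsto (fun i => L1dist (v i) u) l (𝓝 0)) :
    ((jumpSet volume u ∩ Ioo 0 1).encard : ℝ≥0∞) ≤
      liminf (fun i => ((jumpSet volume (v i) ∩ Ioo 0 1).encard : ℝ≥0∞)) l := by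
  have hlim' : Tendsto (fun i => ∫ t in Ioo 0 1, ‖v i t - u t‖) l (𝓝 0) := by
    simpa only [L1dist, mu01, integral_Icc_eq_integral_Ioo, Real.norm_eq_abs] using hlim
  calc ((jumpSet volume u ∩ Ioo 0 1).encard : ℝ≥0∞)
      ≤ (liminf (fun i => (jumpSet volume (v i) ∩ Ioo 0 1).encard) l : ℕ∞) :=
        ENat.toENNReal_mono (encard_jumpSet_inter_le_liminf isOpen_Ioo
          (hu.mono_set Ioo_subset_Icc_self) (fun i => (hv i).mono_set Ioo_subset_Icc_self) hlim')
    _ = _ := ENat.toENNReal_mono.map_liminf_of_continuousAt _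
        ENat.continuous_toENNReal.continuousAt

theorem statement_0_general (hf : IntegrableOn f (Icc 0 1)) (hγ : 0 < γ) (X : ι → Set ℝ)
    (hu : IntegrableOn u (Icc 0 1)) (hv : ∀ i, IntegrableOn (v i) (Icc 0 1))
    (hlim : Tendsto (fun i => L1dist (v i) u) l (𝓝 0)) :
    Potts γ f u ≤ liminf (fun i => PottsIn γ f (X i) (v i)) l := by
  rcases l.eq_or_neBot with rfl | _
  · simp
  have hdist := ENNReal.tendsto_ofReal (tendsto_L1dist hf hu hv hlim)
  calc Potts γ f u
      = ENNReal.ofReal γ * ((jumpSet volume u ∩ Ioo 0 1).encard : ℝ≥0∞) +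
          ENNReal.ofReal (L1dist u f) := Potts_eq_encard_jumpSet_add hγ
    _ ≤ ENNReal.ofReal γ * liminf (fun i => ((jumpSet volume (v i) ∩ Ioo 0 1).encard : ℝ≥0∞)) l +
          liminf (fun i => ENNReal.ofReal (L1dist (v i) f)) l := by
      rw [hdist.liminf_eq]
      gcongr
      exact encard_jumpSet_inter_Ioo_le_liminf hu hv hlim
    _ ≤ liminf (fun i => Potts γ f (v i)) l := by
      rw [← ENNReal.liminf_const_mul_of_ne_top ENNReal.ofReal_ne_top]
      simp only [Potts_eq_encard_jumpSet_add hγ]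
      exact liminf_add_liminf_le_liminf_add _ _ l
    _ ≤ liminf (fun i => PottsIn γ f (X i) (v i)) l :=
      liminf_le_liminf (Eventually.of_forall fun i => Potts_le_PottsIn γ f (X i) (v i))

end Potts

theorem statement_0
    (f : ℝ → ℝ) (hf : IntegrableOn f (Set.Icc 0 1))
    (γ : ℝ) (hγ : 0 < γ)
    (X : ℕ → Set ℝ) (hXfin : ∀ k, (X k).Finite) (hXsub : ∀ k, X k ⊆ Set.Icc 0 1)
    (hXnest : ∀ k, X k ⊆ X (k + 1)) (hXdense : Set.Icc (0:ℝ) 1 ⊆ closure (⋃ k, X k))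
    (u : ℝ → ℝ) (hu : IntegrableOn u (Set.Icc 0 1))
    (useq : ℕ → ℝ → ℝ) (huseq : ∀ k, IntegrableOn (useq k) (Set.Icc 0 1))
    (hconv : Tendsto (fun k => L1dist (useq k) u) atTop (nhds 0)) :
    Potts γ f u ≤ liminf (fun k => PottsIn γ f (X k) (useq k)) atTop :=
  statement_0_general hf hγ X hu huseq hconv
end
end

section
/- Let u ∈ PC[0,1] be non-constant, let h > 0 be the minimal jump height of u and l > 0 the minimal length of its intervals of constancy. Then every piecewise constant function w on [0,1] with J(w) < J(u) satisfies ‖w − u‖_{L¹[0,1]} ≥ (1/2)·h·l. -/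
open MeasureTheory Filter Set
open scoped ENNReal Classical

noncomputable section

/-! Let `u` jump from `α` to `β` at an interior partition point `p`. The windows of length `l`
centred at the jumps of `u` are pairwise disjoint, so `w`, having fewer jumps than `u`, has no jump
in at least one of them. There `w` is a constant `c`, while `u` is `α` on the left half and `β` on
the right half, so this window alone contributes `(l / 2) * (|c - α| + |c - β|)`, which is at least
`(l / 2) * |α - β|`. -/

theorem exists_forall_notMem_of_card_lt {α ι κ : Type*} [Fintype ι] [Fintype κ]
    (hcard : Fintype.card κ < Fintype.card ι) {s : ι → Set α}
    (hs : Pairwise (Function.onFun Disjoint s)) (z : κ → α) : ∃ i, ∀ j, z j ∉ s i := by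
  by_contra! hmeet
  choose f hf using hmeet
  obtain ⟨i, i', hne, heq⟩ := Fintype.exists_ne_map_eq_of_card_lt f hcard
  exact disjoint_left.1 (hs hne) (hf i) (heq ▸ hf i')

theorem exists_castSucc_le_and_le_succ_of_forall_notMem_Ioo {α : Type*} [LinearOrder α]
    {n : ℕ} {x : Fin (n + 2) → α} {p q : α} (hp : x 0 ≤ p)
    (hq : q ≤ x (Fin.last (n + 1))) (havoid : ∀ j : Fin n, x j.succ.castSucc ∉ Ioo p q) :
    ∃ j : Fin (n + 1), x j.castSucc ≤ p ∧ q ≤ x j.succ := by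
  by_contra! hlt
  have hle : ∀ j : Fin (n + 1), x j.castSucc ≤ p := fun j => by
    induction j using Fin.induction with
    | zero => exact hp
    | succ j ih => exact not_lt.1 fun h => havoid j ⟨h, hlt j.castSucc ih⟩
  exact (hlt (Fin.last n) (hle _)).not_ge hq

theorem le_sub_of_lt_of_forall_le_succ_sub_castSucc {G : Type*} [AddCommGroup G] [Preorder G]
    [IsOrderedAddMonoid G] {n : ℕ} {x : Fin (n + 1) → G} (hx : Monotone x) {d : G}
    (hd : ∀ i : Fin n, d ≤ x i.succ - x i.castSucc) {i j : Fin (n + 1)} (hij : i < j) :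
    d ≤ x j - x i := by
  obtain ⟨i, rfl⟩ := Fin.exists_castSucc_eq.2 (Fin.ne_last_of_lt hij)
  exact (hd i).trans (sub_le_sub_right (hx (Fin.castSucc_lt_iff_succ_le.1 hij)) _)

theorem pairwise_disjoint_Ioo_sub_add_half {ι R : Type*} [LinearOrder ι] [Field R]
    [LinearOrder R] [IsStrictOrderedRing R] {x : ι → R} {d : R}
    (hx : ∀ i j, i < j → d ≤ x j - x i) :
    Pairwise (Function.onFun Disjoint fun i => Ioo (x i - d / 2) (x i + d / 2)) := by
  refine (pairwise_disjoint_on _).2 fun i j hij => disjoint_left.2 fun t hi hj => ?_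
  linarith [hx i j hij, hi.2, hj.1]

theorem exists_window_within_piece {R : Type*} [Field R] [LinearOrder R] [IsStrictOrderedRing R]
    {n k : ℕ} (hkn : k < n) {x : Fin (n + 2) → R} {y : Fin (k + 2) → R} (hx : Monotone x)
    (h0 : y 0 ≤ x 0) (h1 : x (Fin.last (n + 1)) ≤ y (Fin.last (k + 1))) {d : R}
    (hd : ∀ i : Fin (n + 1), d ≤ x i.succ - x i.castSucc) :
    ∃ (i : Fin n) (j : Fin (k + 1)), y j.castSucc ≤ x i.succ.castSucc - d / 2 ∧
      x i.succ.castSucc + d / 2 ≤ y j.succ := by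
  have hdisj := pairwise_disjoint_Ioo_sub_add_half (x := fun i : Fin n => x i.succ.castSucc)
    fun i j hij => le_sub_of_lt_of_forall_le_succ_sub_castSucc hx hd
      (Fin.castSucc_lt_castSucc_iff.2 (Fin.succ_lt_succ_iff.2 hij))
  obtain ⟨i, hi⟩ := exists_forall_notMem_of_card_lt (by simpa using hkn) hdisj
    fun j : Fin k => y j.succ.castSucc
  have hgap : d ≤ x i.succ.castSucc - x i.castSucc.castSucc := hd i.castSucc
  have hleft : x 0 ≤ x i.succ.castSucc - d / 2 := by
    linarith [hx (Fin.zero_le i.castSucc.castSucc), hx (Fin.zero_le i.succ.castSucc)]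
  have hright : x i.succ.castSucc + d / 2 ≤ x (Fin.last (n + 1)) := by
    linarith [hd i.succ, hx (Fin.le_last i.succ.succ), hx (Fin.le_last i.succ.castSucc)]
  exact ⟨i, exists_castSucc_le_and_le_succ_of_forall_notMem_Ioo (h0.trans hleft)
    (hright.trans h1) hi⟩

theorem min_measureReal_mul_norm_sub_le_integral_norm_sub {α E : Type*} [MeasurableSpace α]
    [NormedAddCommGroup E] {μ : Measure α} {f g : α → E} (hfg : Integrable (fun x => f x - g x) μ)
    {s t : Set α} (ht : MeasurableSet t) (hst : Disjoint s t) {a b c : E}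
    (hfs : f =ᵐ[μ.restrict s] fun _ => c) (hft : f =ᵐ[μ.restrict t] fun _ => c)
    (hgs : g =ᵐ[μ.restrict s] fun _ => a) (hgt : g =ᵐ[μ.restrict t] fun _ => b) :
    min (μ.real s) (μ.real t) * ‖b - a‖ ≤ ∫ x, ‖f x - g x‖ ∂μ := by
  have hint : ∀ {r : Set α} {e : E}, f =ᵐ[μ.restrict r] (fun _ => c) →
      g =ᵐ[μ.restrict r] (fun _ => e) → ∫ x in r, ‖f x - g x‖ ∂μ = μ.real r * ‖c - e‖ := by
    intro r e hf hg
    rw [← smul_eq_mul, ← setIntegral_const]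
    exact integral_congr_ae ((hf.sub hg).fun_comp norm)
  calc min (μ.real s) (μ.real t) * ‖b - a‖
      ≤ min (μ.real s) (μ.real t) * (‖c - a‖ + ‖c - b‖) := by
        gcongr
        rw [add_comm, norm_sub_rev c b]
        exact norm_sub_le_norm_sub_add_norm_sub b c a
    _ ≤ μ.real s * ‖c - a‖ + μ.real t * ‖c - b‖ := by
        rw [mul_add]
        gcongr
        exacts [min_le_left _ _, min_le_right _ _]
    _ = ∫ x in s ∪ t, ‖f x - g x‖ ∂μ := by
        rw [setIntegral_union hst ht hfg.norm.integrableOn hfg.norm.integrableOn, hint hfs hgs,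
          hint hft hgt]
    _ ≤ ∫ x, ‖f x - g x‖ ∂μ :=
        setIntegral_le_integral hfg.norm (Eventually.of_forall fun _ => norm_nonneg _)

instance : IsFiniteMeasure mu01 := by
  unfold mu01
  infer_instance

theorem measureReal_mu01_Ioo {p q : ℝ} (hp : 0 ≤ p) (hpq : p ≤ q) (hq : q ≤ 1) :
    mu01.real (Ioo p q) = q - p := by
  rw [mu01, measureReal_restrict_apply measurableSet_Ioo,
    inter_eq_left.2 (Ioo_subset_Icc_self.trans (Icc_subset_Icc hp hq)),
    Real.volume_real_Ioo_of_le hpq]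

theorem stepF_of_mem_Ioo {m : ℕ} {x : Fin (m + 1) → ℝ} (hx : Monotone x) (a : Fin m → ℝ)
    {j : Fin m} {t : ℝ} (ht : t ∈ Ioo (x j.castSucc) (x j.succ)) : stepF x a t = a j := by
  rw [stepF, Finset.sum_eq_single_of_mem j (Finset.mem_univ j), indicator_of_mem ht]
  intro l _ hlj
  refine indicator_of_notMem (fun hl => ?_) _
  rcases hlj.lt_or_gt with hlt | hgt
  · exact (ht.1.trans hl.2).not_ge (hx (Fin.succ_le_castSucc_iff.2 hlt))
  · exact (hl.1.trans ht.2).not_ge (hx (Fin.succ_le_castSucc_iff.2 hgt))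

theorem integrable_stepF {m : ℕ} (x : Fin (m + 1) → ℝ) (a : Fin m → ℝ) (μ : Measure ℝ)
    [IsLocallyFiniteMeasure μ] : Integrable (stepF x a) μ :=
  integrable_finsetSum _ fun _ _ =>
    (integrableOn_const measure_Ioo_lt_top.ne).integrable_indicator measurableSet_Ioo

namespace IsPCRep

variable {u : ℝ → ℝ} {m : ℕ} {x : Fin (m + 1) → ℝ} {a : Fin m → ℝ}

theorem integrable (hu : IsPCRep u x a) : Integrable u mu01 :=
  (integrable_stepF x a mu01).congr (EventuallyEq.symm hu.2.2.2)

theorem ae_eq_const_of_subset (hu : IsPCRep u x a) {j : Fin m} {s : Set ℝ}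
    (hs : s ⊆ Ioo (x j.castSucc) (x j.succ)) : u =ᵐ[mu01.restrict s] fun _ => a j := by
  obtain ⟨hx, -, -, hua⟩ := hu
  refine ae_restrict_of_ae_restrict_of_subset hs ?_
  filter_upwards [ae_restrict_of_ae hua, ae_restrict_mem measurableSet_Ioo] with t hut ht
  rw [hut, stepF_of_mem_Ioo hx.monotone a ht]

theorem partition_mem_Icc (hu : IsPCRep u x a) (i : Fin (m + 1)) : x i ∈ Icc (0 : ℝ) 1 := by
  obtain ⟨hx, hx0, hx1, -⟩ := hu
  exact ⟨hx0 ▸ hx.monotone (Fin.zero_le i), hx1 ▸ hx.monotone (Fin.le_last i)⟩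

end IsPCRep

theorem IsPCRep.jumps_le {u : ℝ → ℝ} {n : ℕ} {x : Fin (n + 2) → ℝ} {a : Fin (n + 1) → ℝ}
    (hu : IsPCRep u x a) : jumps u ≤ n :=
  Nat.sInf_le ⟨x, a, hu⟩

theorem IsPC.exists_isPCRep_jumps_s4 {w : ℝ → ℝ} (hw : IsPC w) :
    ∃ (y : Fin (jumps w + 2) → ℝ) (b : Fin (jumps w + 1) → ℝ), IsPCRep w y b := by
  obtain ⟨m, y, b, hrep⟩ := hw
  cases m with
  | zero => exact absurd (hrep.2.1.symm.trans hrep.2.2.1) zero_ne_one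
  | succ n =>
    exact Nat.sInf_mem (s := {k | ∃ (y : Fin (k + 2) → ℝ) (b : Fin (k + 1) → ℝ), IsPCRep w y b})
      ⟨n, y, b, hrep⟩

theorem IsPCRep.mul_abs_sub_le_L1dist {u w : ℝ → ℝ} {n m : ℕ} {x : Fin (n + 2) → ℝ}
    {a : Fin (n + 1) → ℝ} {y : Fin (m + 1) → ℝ} {b : Fin m → ℝ} (hu : IsPCRep u x a)
    (hw : IsPCRep w y b) {i : Fin n} {j : Fin m} {r : ℝ} (hr : 0 ≤ r)
    (hxl : x i.castSucc.castSucc ≤ x i.succ.castSucc - r)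
    (hxr : x i.succ.castSucc + r ≤ x i.succ.succ)
    (hyl : y j.castSucc ≤ x i.succ.castSucc - r) (hyr : x i.succ.castSucc + r ≤ y j.succ) :
    r * |a i.succ - a i.castSucc| ≤ L1dist w u := by
  set p := x i.succ.castSucc
  have hleft : mu01.real (Ioo (p - r) p) = r := by
    rw [measureReal_mu01_Ioo ((hu.partition_mem_Icc _).1.trans hxl) (sub_le_self p hr)
      (hu.partition_mem_Icc _).2, sub_sub_cancel]
  have hright : mu01.real (Ioo p (p + r)) = r := by
    rw [measureReal_mu01_Ioo (hu.partition_mem_Icc _).1 (le_add_of_nonneg_right hr)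
      (hxr.trans (hu.partition_mem_Icc _).2), add_sub_cancel_left]
  have hdisj : Disjoint (Ioo (p - r) p) (Ioo p (p + r)) :=
    disjoint_left.2 fun _ ht ht' => lt_asymm ht.2 ht'.1
  have hmin := min_measureReal_mul_norm_sub_le_integral_norm_sub (hw.integrable.sub hu.integrable)
    measurableSet_Ioo hdisj
    (hw.ae_eq_const_of_subset (j := j) (Ioo_subset_Ioo hyl (by linarith)))
    (hw.ae_eq_const_of_subset (j := j) (Ioo_subset_Ioo (by linarith) hyr))
    (hu.ae_eq_const_of_subset (j := i.castSucc) (Ioo_subset_Ioo_left hxl))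
    (hu.ae_eq_const_of_subset (j := i.succ) (Ioo_subset_Ioo_right hxr))
  rwa [hleft, hright, min_self] at hmin

theorem statement_4
    (u : ℝ → ℝ) (m : ℕ) (x : Fin (m + 3) → ℝ) (a : Fin (m + 2) → ℝ)
    -- `u` is piecewise constant with `m+2` pieces, in a minimal representation
    -- (values of adjacent pieces differ); in particular `u` is non-constant.
    (hrep : IsPCRep u x a)
    (hadj : ∀ i : Fin (m + 1), a i.castSucc ≠ a i.succ)
    (w : ℝ → ℝ) (hw : IsPC w) (hJ : jumps w < jumps u) :
    (Finset.univ.inf' Finset.univ_nonempty fun i : Fin (m + 1) => |a i.succ - a i.castSucc|) *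
      (Finset.univ.inf' Finset.univ_nonempty fun i : Fin (m + 2) => x i.succ - x i.castSucc) / 2
      ≤ L1dist w u := by
  set h := Finset.univ.inf' Finset.univ_nonempty fun i : Fin (m + 1) => |a i.succ - a i.castSucc|
  set l := Finset.univ.inf' Finset.univ_nonempty fun i : Fin (m + 2) => x i.succ - x i.castSucc
  have hh : ∀ i : Fin (m + 1), h ≤ |a i.succ - a i.castSucc| := fun i =>
    Finset.inf'_le _ (Finset.mem_univ i)
  have hl : ∀ i : Fin (m + 2), l ≤ x i.succ - x i.castSucc := fun i =>
    Finset.inf'_le _ (Finset.mem_univ i)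
  have hl0 : 0 ≤ l := Finset.le_inf' _ _ fun i _ =>
    sub_nonneg.2 (hrep.1 Fin.castSucc_lt_succ).le
  obtain ⟨y, b, hwrep⟩ := hw.exists_isPCRep_jumps_s4
  obtain ⟨i, j, hyl, hyr⟩ := exists_window_within_piece (hJ.trans_le hrep.jumps_le) hrep.1.monotone
    (hwrep.2.1.trans hrep.2.1.symm).le (hrep.2.2.1.trans hwrep.2.2.1.symm).le hl
  have hxl : l ≤ x i.succ.castSucc - x i.castSucc.castSucc := hl i.castSucc
  calc h * l / 2 = l / 2 * h := by ring
    _ ≤ l / 2 * |a i.succ - a i.castSucc| := by gcongr; exact hh i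
    _ ≤ L1dist w u := hrep.mul_abs_sub_le_L1dist hwrep (by positivity) (by linarith)
        (by linarith [hl i.succ]) hyl hyr
end
end
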